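/- In GL(2, ℤ₂), let G_{4,a} = ⟨5·Id, [[1,2],[−2,1]]⟩, G_{4,b} = ⟨5·Id, [[−1,−2],[2,−1]]⟩, G_{4,c} = ⟨−3·Id, [[2,−1],[1,2]]⟩ and G_{4,d} = ⟨−3·Id, [[−2,1],[−1,−2]]⟩ be the closed subgroups topologically generated by the indicated matrices, and set c₁ = diag(1,−1), c₋₁ = diag(−1,1), c₁′ = [[0,1],[1,0]], c₋₁′ = [[0,−1],[−1,0]]. Then for each X ∈ {G_{4,a}, G_{4,b}, G_{4,c}, G_{4,d}}, the subgroup ⟨X, c₁⟩ is conjugate in GL(2, ℤ₂) to ⟨X, c₋₁⟩, and ⟨X, c₁′⟩ is conjugate in GL(2, ℤ₂) to ⟨X, c₋₁′⟩. -/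

import Mathlib

/-!
The rotation `J = [[0,-1],[1,0]]` realizes all eight conjugacies at once. Every generator of
`X` has the form `a + bJ`, so it commutes with `J` and conjugation by `J` maps `X` to itself
(`map_conj_clGen`). On the other hand `c₁` and `c₁′` are reflections and anticommute with
`J`, so conjugation by `J` sends them to `-c₁ = c₋₁` and `-c₁′ = c₋₁′`. Conjugation is a
homeomorphism, hence compatible with taking closures (`map_conj_topologicalClosure`).
-/

open scoped MatrixGroups

/-- The closed subgroup of `GL(2, ℤ₂)` topologically generated by the elements whose
underlying matrices lie in the set `S` of matrices. -/
noncomputable def clGen (S : Set (Matrix (Fin 2) (Fin 2) ℤ_[2])) : Subgroup (GL (Fin 2) ℤ_[2]) :=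
  (Subgroup.closure
    {g : GL (Fin 2) ℤ_[2] | (g : Matrix (Fin 2) (Fin 2) ℤ_[2]) ∈ S}).topologicalClosure

/-- The closed subgroup of `GL(2, ℤ₂)` topologically generated by a subgroup `X` together
with an element `c`. -/
noncomputable def tjoin (X : Subgroup (GL (Fin 2) ℤ_[2])) (c : GL (Fin 2) ℤ_[2]) :
    Subgroup (GL (Fin 2) ℤ_[2]) :=
  (X ⊔ Subgroup.closure {c}).topologicalClosure

/-- An involution of `GL(2, ℤ₂)` built from a matrix squaring to the identity. -/
noncomputable def glInvol (M : Matrix (Fin 2) (Fin 2) ℤ_[2]) (h : M * M = 1) :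
    GL (Fin 2) ℤ_[2] := ⟨M, M, h, h⟩

/-- `c₁ = diag(1,−1)`. -/
noncomputable def c1 : GL (Fin 2) ℤ_[2] :=
  glInvol !![1, 0; 0, -1]
    (by ext i j; fin_cases i <;> fin_cases j <;> simp [Matrix.mul_apply, Fin.sum_univ_succ])

/-- `c₋₁ = diag(−1,1)`. -/
noncomputable def cm1 : GL (Fin 2) ℤ_[2] :=
  glInvol !![-1, 0; 0, 1]
    (by ext i j; fin_cases i <;> fin_cases j <;> simp [Matrix.mul_apply, Fin.sum_univ_succ])

/-- `c₁′ = [[0,1],[1,0]]`. -/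
noncomputable def c1' : GL (Fin 2) ℤ_[2] :=
  glInvol !![0, 1; 1, 0]
    (by ext i j; fin_cases i <;> fin_cases j <;> simp [Matrix.mul_apply, Fin.sum_univ_succ])

/-- `c₋₁′ = [[0,−1],[−1,0]]`. -/
noncomputable def cm1' : GL (Fin 2) ℤ_[2] :=
  glInvol !![0, -1; -1, 0]
    (by ext i j; fin_cases i <;> fin_cases j <;> simp [Matrix.mul_apply, Fin.sum_univ_succ])

/-- `G_{4,a} = ⟨5·Id, [[1,2],[−2,1]]⟩` (topologically generated). -/
noncomputable def G4a : Subgroup (GL (Fin 2) ℤ_[2]) :=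
  clGen {(5 : Matrix (Fin 2) (Fin 2) ℤ_[2]), !![1, 2; -2, 1]}

/-- `G_{4,b} = ⟨5·Id, [[−1,−2],[2,−1]]⟩` (topologically generated). -/
noncomputable def G4b : Subgroup (GL (Fin 2) ℤ_[2]) :=
  clGen {(5 : Matrix (Fin 2) (Fin 2) ℤ_[2]), !![-1, -2; 2, -1]}

/-- `G_{4,c} = ⟨−3·Id, [[2,−1],[1,2]]⟩` (topologically generated). -/
noncomputable def G4c : Subgroup (GL (Fin 2) ℤ_[2]) :=
  clGen {(-3 : Matrix (Fin 2) (Fin 2) ℤ_[2]), !![2, -1; 1, 2]}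

/-- `G_{4,d} = ⟨−3·Id, [[−2,1],[−1,−2]]⟩` (topologically generated). -/
noncomputable def G4d : Subgroup (GL (Fin 2) ℤ_[2]) :=
  clGen {(-3 : Matrix (Fin 2) (Fin 2) ℤ_[2]), !![-2, 1; -1, -2]}

/-- The rotation `J = [[0,-1],[1,0]]`, with inverse `-J`. -/
noncomputable def rotJ : GL (Fin 2) ℤ_[2] :=
  ⟨!![0, -1; 1, 0], !![0, 1; -1, 0],
    by simp [Matrix.one_fin_two], by simp [Matrix.one_fin_two]⟩

theorem map_conj_topologicalClosure {G : Type*} [Group G] [TopologicalSpace G]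
    [IsTopologicalGroup G] (g : G) (S : Subgroup G) :
    S.topologicalClosure.map (MulAut.conj g).toMonoidHom =
      (S.map (MulAut.conj g).toMonoidHom).topologicalClosure := by
  apply SetLike.coe_injective
  exact ((Homeomorph.mulLeft g).trans (Homeomorph.mulRight g⁻¹)).image_closure (S : Set G)

theorem map_conj_clGen (g : GL (Fin 2) ℤ_[2]) (S : Set (Matrix (Fin 2) (Fin 2) ℤ_[2]))
    (hS : ∀ A ∈ S, Commute (g : Matrix (Fin 2) (Fin 2) ℤ_[2]) A) :
    (clGen S).map (MulAut.conj g).toMonoidHom = clGen S := by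
  have hfix : ∀ x : GL (Fin 2) ℤ_[2], (x : Matrix (Fin 2) (Fin 2) ℤ_[2]) ∈ S →
      (MulAut.conj g).toMonoidHom x = x := fun x hx => by
    have h : g * x = x * g := Units.ext (hS _ hx)
    simp [h]
  rw [clGen, map_conj_topologicalClosure, MonoidHom.map_closure,
    Set.EqOn.image_eq_self (f := (MulAut.conj g).toMonoidHom)
      (s := {x : GL (Fin 2) ℤ_[2] | (x : Matrix (Fin 2) (Fin 2) ℤ_[2]) ∈ S}) hfix]

theorem map_conj_tjoin {g c d : GL (Fin 2) ℤ_[2]} {X : Subgroup (GL (Fin 2) ℤ_[2])}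
    (hX : X.map (MulAut.conj g).toMonoidHom = X) (hc : g * c = d * g) :
    (tjoin X c).map (MulAut.conj g).toMonoidHom = tjoin X d := by
  have h : (MulAut.conj g).toMonoidHom c = d := by simp [hc]
  rw [tjoin, map_conj_topologicalClosure, Subgroup.map_sup, hX, MonoidHom.map_closure,
    Set.image_singleton, h, tjoin]

theorem rotJ_mul_c1 : rotJ * c1 = cm1 * rotJ := by
  apply Units.ext
  simp [rotJ, c1, cm1, glInvol]

theorem rotJ_mul_c1' : rotJ * c1' = cm1' * rotJ := by
  apply Units.ext
  simp [rotJ, c1', cm1', glInvol]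

/-- For each `X ∈ {G_{4,a}, G_{4,b}, G_{4,c}, G_{4,d}}`, the subgroup
`⟨X, c₁⟩` is conjugate in `GL(2, ℤ₂)` to `⟨X, c₋₁⟩`, and `⟨X, c₁′⟩` is conjugate in
`GL(2, ℤ₂)` to `⟨X, c₋₁′⟩`. -/
theorem stmt_18 :
    ∀ X ∈ ({G4a, G4b, G4c, G4d} : Set (Subgroup (GL (Fin 2) ℤ_[2]))),
      (∃ g : GL (Fin 2) ℤ_[2],
        (tjoin X c1).map (MulAut.conj g).toMonoidHom = tjoin X cm1) ∧
      (∃ g : GL (Fin 2) ℤ_[2],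
        (tjoin X c1').map (MulAut.conj g).toMonoidHom = tjoin X cm1') := by
  intro X hX
  have hfix : X.map (MulAut.conj rotJ).toMonoidHom = X := by
    rcases hX with rfl | rfl | rfl | rfl <;> apply map_conj_clGen <;> rintro A (rfl | rfl)
    -- In each pair of generators the first is a numeral, hence central.
    · exact Commute.ofNat_right _ 5
    · simp [Commute, SemiconjBy, rotJ]
    · exact Commute.ofNat_right _ 5
    · simp [Commute, SemiconjBy, rotJ]
    · exact (Commute.ofNat_right _ 3).neg_right
    · simp [Commute, SemiconjBy, rotJ]
    · exact (Commute.ofNat_right _ 3).neg_right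
    · simp [Commute, SemiconjBy, rotJ]
  exact ⟨⟨rotJ, map_conj_tjoin hfix rotJ_mul_c1⟩, ⟨rotJ, map_conj_tjoin hfix rotJ_mul_c1'⟩⟩
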